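/- Under Assumption (A), let K ⊆ Γ_∞ be a compact subset. Then there exists R₀ > 0 such that for every λ ∈ K and every λ̃ in the closed positive orthant Γ̄ₙ = {μ ∈ ℝⁿ : μᵢ ≥ 0 for all i} with |λ̃| ≥ R₀, one has λ + λ̃ ∈ Γ. -/

import Mathlib

open Filter

/-- Assumption (A) from the paper: `Γ ⊆ ℝⁿ` is an open convex symmetric cone with
`Γₙ ⊆ Γ ⊆ Γ₁`, and `f : Γ → (0,∞)` is smooth, symmetric, concave, with positive partial
derivatives, vanishing at the boundary of `Γ`, and `f(Rλ) → +∞` as `R → +∞`. -/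
structure AssumptionA (n : ℕ) (Γ : Set (Fin n → ℝ)) (f : (Fin n → ℝ) → ℝ) : Prop where
  isOpen : IsOpen Γ
  convex : Convex ℝ Γ
  cone : ∀ x ∈ Γ, ∀ t : ℝ, 0 < t → t • x ∈ Γ
  perm_invariant : ∀ x ∈ Γ, ∀ σ : Equiv.Perm (Fin n), (fun i => x (σ i)) ∈ Γ
  orthant_subset : {x : Fin n → ℝ | ∀ i, 0 < x i} ⊆ Γ
  subset_halfspace : Γ ⊆ {x : Fin n → ℝ | 0 < ∑ i, x i}
  f_pos : ∀ x ∈ Γ, 0 < f x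
  f_smooth : ContDiffOn ℝ (⊤ : ℕ∞) f Γ
  f_perm_invariant : ∀ x ∈ Γ, ∀ σ : Equiv.Perm (Fin n), f (fun i => x (σ i)) = f x
  f_concave : ConcaveOn ℝ Γ f
  f_deriv_pos : ∀ x ∈ Γ, ∀ i : Fin n, 0 < fderiv ℝ f x (Pi.single i 1)
  f_boundary_zero : ∀ x₀ ∈ frontier Γ, Tendsto f (nhdsWithin x₀ Γ) (nhds 0)
  f_proper : ∀ x ∈ Γ, Tendsto (fun R : ℝ => f (R • x)) atTop atTop

/-- `Γ_∞`: the set of `λ ∈ ℝⁿ` such that for every `i`, replacing the `i`-th coordinate by any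
sufficiently large `R` lands in `Γ`. -/
def GammaInfty (n : ℕ) (Γ : Set (Fin n → ℝ)) : Set (Fin n → ℝ) :=
  {x | ∀ i : Fin n, ∃ R₀ : ℝ, ∀ R ≥ R₀, Function.update x i R ∈ Γ}

/-- `f_{∞,i}(λ) = lim_{R→+∞} f(λ₁,…,λ_{i−1},R,λ_{i+1},…,λₙ)`, realized as a limsup in `EReal`
(the limit exists in `(0,+∞]` since `f` is increasing in `λᵢ`). -/
noncomputable def fInftyi (n : ℕ) (f : (Fin n → ℝ) → ℝ) (i : Fin n) (x : Fin n → ℝ) : EReal :=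
  Filter.limsup (fun R : ℝ => ((f (Function.update x i R) : ℝ) : EReal)) Filter.atTop

/-- `f_∞(λ) = min_{1 ≤ i ≤ n} f_{∞,i}(λ)`, with values in `(0,+∞]`. -/
noncomputable def fInfty (n : ℕ) (f : (Fin n → ℝ) → ℝ) (x : Fin n → ℝ) : EReal :=
  ⨅ i : Fin n, fInftyi n f i x

/-!
An open convex cone containing the open orthant is stable under adding vectors of the closed
orthant, i.e. it is an upper set. If `|λ̃|` is large, then so is some coordinate `λ̃ᵢ`, and
`λ + λ̃` dominates the vector obtained from `λ` by replacing `λᵢ` with a constant `R`; compactness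
of `K` lets one choose `R` independently of `λ ∈ K`.
-/

theorem add_mem_of_convex_of_smul_mem {𝕜 E : Type*} [Field 𝕜] [LinearOrder 𝕜]
    [IsStrictOrderedRing 𝕜] [AddCommGroup E] [Module 𝕜 E] {s : Set E} (hs : Convex 𝕜 s)
    (hsmul : ∀ x ∈ s, ∀ t : 𝕜, 0 < t → t • x ∈ s) {x y : E} (hx : x ∈ s) (hy : y ∈ s) :
    x + y ∈ s := by
  have h : (2 : 𝕜) • midpoint 𝕜 x y ∈ s := hsmul _ (hs.midpoint_mem hx hy) 2 two_pos
  rwa [two_smul, midpoint_add_self] at h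

section Pi

variable {ι : Type*} {α : ι → Type*} [∀ i, TopologicalSpace (α i)] {Γ K : Set (∀ i, α i)}

open Set in
theorem closure_pi_univ_Ioi [∀ i, LinearOrder (α i)] [∀ i, OrderTopology (α i)]
    [∀ i, DenselyOrdered (α i)] [∀ i, NoMaxOrder (α i)] (a : ∀ i, α i) :
    closure (univ.pi fun i ↦ Ioi (a i)) = Ici a := by
  simp only [closure_pi_set, closure_Ioi, pi_univ_Ici]

open Set Pointwise in
theorem isUpperSet_of_isOpen_of_add_pi_Ioi_subset [∀ i, AddCommGroup (α i)]
    [∀ i, LinearOrder (α i)] [∀ i, IsOrderedAddMonoid (α i)] [∀ i, OrderTopology (α i)]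
    [∀ i, DenselyOrdered (α i)] [∀ i, NoMaxOrder (α i)] (hΓ : IsOpen Γ)
    (hadd : Γ + (univ.pi fun _ ↦ Ioi 0) ⊆ Γ) : IsUpperSet Γ := by
  intro x y hxy hx
  have hclosed : Γ + Ici 0 ⊆ Γ := by
    rwa [← closure_pi_univ_Ioi, hΓ.add_closure]
  simpa only [add_sub_cancel] using hclosed (add_mem_add hx (mem_Ici.2 (sub_nonneg.2 hxy)))

variable [DecidableEq ι]

theorem exists_forall_mem_update_mem_of_isCompact [∀ i, Preorder (α i)] (i : ι) [Nonempty (α i)]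
    [IsDirectedOrder (α i)] (hΓ : IsOpen Γ) (hup : IsUpperSet Γ) (hK : IsCompact K)
    (h : ∀ x ∈ K, ∃ r, Function.update x i r ∈ Γ) :
    ∃ r, ∀ x ∈ K, Function.update x i r ∈ Γ := by
  refine hK.elim_directed_cover (fun r ↦ {x | Function.update x i r ∈ Γ})
    (fun r ↦ hΓ.preimage (continuous_id.update i continuous_const))
    (fun x hx ↦ Set.mem_iUnion.2 (h x hx)) (Monotone.directed_le fun r s hrs x hx ↦ ?_)
  exact hup (Function.update_mono hrs) hx

theorem exists_forall_mem_add_mem_of_isCompact [∀ i, AddCommGroup (α i)] [∀ i, LinearOrder (α i)]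
    [∀ i, IsOrderedAddMonoid (α i)] (i : ι) [ClosedIicTopology (α i)] (hΓ : IsOpen Γ)
    (hup : IsUpperSet Γ) (hK : IsCompact K) (h : ∀ x ∈ K, ∃ r, Function.update x i r ∈ Γ) :
    ∃ M, ∀ x ∈ K, ∀ y, 0 ≤ y → M ≤ y i → x + y ∈ Γ := by
  obtain ⟨r, hr⟩ := exists_forall_mem_update_mem_of_isCompact i hΓ hup hK h
  obtain ⟨m, hm⟩ := hK.bddBelow_image (continuous_apply i).continuousOn
  refine ⟨r - m, fun x hx y hy hM ↦ hup (update_le_iff.2 ⟨?_, fun j _ ↦ ?_⟩) (hr x hx)⟩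
  · calc r = m + (r - m) := (add_sub_cancel m r).symm
      _ ≤ x i + y i := add_le_add (hm (Set.mem_image_of_mem _ hx)) hM
  · exact le_add_of_nonneg_right (hy j)

end Pi

theorem stmt_5_general {ι : Type*} [Fintype ι] [DecidableEq ι] {Γ K : Set (ι → ℝ)}
    (hΓ : IsOpen Γ) (hup : IsUpperSet Γ) (hK : IsCompact K)
    (hKΓ : ∀ x ∈ K, ∀ i, ∃ r, Function.update x i r ∈ Γ) :
    ∃ R₀ : ℝ, 0 < R₀ ∧
      ∀ x ∈ K, ∀ y : ι → ℝ, (∀ i, 0 ≤ y i) → R₀ ≤ √(∑ i, y i ^ 2) → x + y ∈ Γ := by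
  choose M hM using fun i ↦ exists_forall_mem_add_mem_of_isCompact i hΓ hup hK (hKΓ · · i)
  refine ⟨√(∑ i, M i ^ 2) + 1, by positivity, fun x hx y hy hR ↦ ?_⟩
  have hsum : ∑ i, M i ^ 2 < ∑ i, y i ^ 2 := lt_of_not_ge fun hle ↦ by
    linarith [Real.sqrt_le_sqrt hle]
  obtain ⟨i, -, hi⟩ := Finset.exists_lt_of_sum_lt hsum
  exact hM i x hx y hy (lt_of_pow_lt_pow_left₀ 2 (hy i) hi).le

theorem AssumptionA.isUpperSet {n : ℕ} {Γ : Set (Fin n → ℝ)} {f : (Fin n → ℝ) → ℝ}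
    (hA : AssumptionA n Γ f) : IsUpperSet Γ :=
  isUpperSet_of_isOpen_of_add_pi_Ioi_subset hA.isOpen <| Set.add_subset_iff.2 fun _ hx _ hy ↦
    add_mem_of_convex_of_smul_mem hA.convex hA.cone hx
      (hA.orthant_subset fun i ↦ hy i (Set.mem_univ i))

/-- Lemma 2.9 (1) of the paper: for every compact `K ⊆ Γ_∞` there is `R₀ > 0` such that for
every `λ ∈ K` and every `λ̃` in the closed positive orthant with Euclidean norm `≥ R₀`,
one has `λ + λ̃ ∈ Γ`. -/
theorem stmt_5 (n : ℕ) (Γ : Set (Fin n → ℝ)) (f : (Fin n → ℝ) → ℝ)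
    (hA : AssumptionA n Γ f)
    (K : Set (Fin n → ℝ)) (hKsub : K ⊆ GammaInfty n Γ) (hK : IsCompact K) :
    ∃ R₀ : ℝ, 0 < R₀ ∧
      ∀ x ∈ K, ∀ y : Fin n → ℝ, (∀ i, 0 ≤ y i) →
        R₀ ≤ Real.sqrt (∑ i, y i ^ 2) → x + y ∈ Γ :=
  stmt_5_general hA.isOpen hA.isUpperSet hK fun _ hx i ↦
    (hKsub hx i).imp fun r hr ↦ hr r le_rfl
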